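/- arXiv:1510.08118 — 2 statements merged into one kernel-verified Lean document; each statement's English description precedes it below -/
import Mathlib

section
/- Let p ≥ 1, set n = 2p, and let α, α', β, β', r > 0 be reals. Then S(n,p,α,β,r) = S(n,p,α',β',r) (as functions ℝ → ℕ) if and only if {α, β} = {α', β'} as unordered pairs. -/
open scoped Classical

/-- The spectrum, with multiplicities, of the generalized Hodge-Laplace operator
`F_{αβ} = α dδ + β δd` on `p`-forms on the round `n`-sphere of radius `r`
(Theorem 4.12 and Proposition 4.15): the eigenvalue `λ(k) = (β/r²)(k+p)(k+n-p-1)` for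
`k ≥ 1` occurs with multiplicity `dim V_k^p` and the eigenvalue
`μ(k) = (α/r²)(k+p)(k+n-p+1)` for `k ≥ 0` with multiplicity `dim W_k^p`. -/
noncomputable def sphereSpec (n p : ℕ) (α β r : ℝ) : ℝ → ℕ := fun x =>
  (∑' k : ℕ,
      if 1 ≤ k ∧ (β / r ^ 2) * (((k + p) * (k + n - p - 1) : ℕ) : ℝ) = x then
        ((n + k - 1).factorial * (n + 2 * k - 1)) /
          (p.factorial * (k - 1).factorial * (n - p - 1).factorial * (n + k - p - 1) * (k + p))
      else 0) +
  (∑' k : ℕ,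
      if (α / r ^ 2) * (((k + p) * (k + n - p + 1) : ℕ) : ℝ) = x then
        ((n + k).factorial * (n + 2 * k + 1)) /
          ((p - 1).factorial * k.factorial * (n - p).factorial * (n + k - p + 1) * (k + p))
      else 0)

/-!
In middle degree the `λ`-family, reindexed by `k ↦ k + 1`, coincides with the `μ`-family, so the
spectrum is a superposition of two dilates of a single weighted spectrum, with dilation factors
`β / r²` and `α / r²`. A finite superposition of dilates of a function whose support has a least
element `e > 0` determines the dilation factors: if `a` has least absolute value among all factors,
then the point `a * e` can only be reached by a dilate with factor `a` itself, and one can cancel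
that dilate and induct.
-/

lemma multiset_pair_eq_pair_iff {ι : Type*} {a b c d : ι} :
    ({a, b} : Multiset ι) = {c, d} ↔ (a = c ∧ b = d) ∨ (a = d ∧ b = c) := by
  simp only [Multiset.insert_eq_cons, Multiset.cons_eq_cons, Multiset.singleton_inj,
    Multiset.singleton_eq_cons_iff]
  grind

section Dilates

variable {K M : Type*} [Field K] [AddCommMonoid M] {f : K → M}

/-- The superposition of the dilates of a weight function `f` by the factors in a multiset, counted
with multiplicity: if `f` is the weighted spectrum of an operator `T`, then `dilateSum f A` is the
spectrum of the direct sum of the operators `a • T` for `a ∈ A`. A factor `0` has no such meaning,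
since it contributes the constant `f 0`. -/
def dilateSum (f : K → M) (A : Multiset K) (x : K) : M :=
  (A.map fun a => f (x / a)).sum

lemma dilateSum_cons (f : K → M) (a : K) (A : Multiset K) (x : K) :
    dilateSum f (a ::ₘ A) x = f (x / a) + dilateSum f A x := by
  simp [dilateSum]

lemma dilateSum_pair (f : K → M) (a b x : K) :
    dilateSum f {a, b} x = f (x / a) + f (x / b) := by
  simp [dilateSum]

lemma dilateSum_eq_zero_iff [Subsingleton (AddUnits M)] {A : Multiset K} {x : K} :
    dilateSum f A x = 0 ↔ ∀ a ∈ A, f (x / a) = 0 := by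
  induction A using Multiset.induction with
  | empty => simp [dilateSum]
  | cons a A ih => simp [dilateSum_cons, ih]

variable [LinearOrder K] [IsStrictOrderedRing K]

lemma eq_of_one_le_div_of_abs_le {a b : K} (hdiv : 1 ≤ a / b) (habs : |a| ≤ |b|) : a = b := by
  have hle : a / b ≤ 1 :=
    calc a / b ≤ |a| / |b| := abs_div a b ▸ le_abs_self _
      _ ≤ 1 := div_le_one_of_le₀ habs (abs_nonneg b)
  exact eq_of_div_eq_one (hle.antisymm hdiv)

variable [Subsingleton (AddUnits M)] {A B : Multiset K} {a e : K}

lemma mem_of_dilateSum_eq (hf : IsLeast f.support e) (he : 0 < e) (ha₀ : a ≠ 0) (ha : a ∈ A)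
    (hmin : ∀ b ∈ B, |a| ≤ |b|) (h : dilateSum f A (a * e) = dilateSum f B (a * e)) : a ∈ B := by
  have hA : dilateSum f A (a * e) ≠ 0 := fun h₀ =>
    hf.1 (by simpa [mul_div_cancel_left₀ e ha₀] using dilateSum_eq_zero_iff.1 h₀ a ha)
  obtain ⟨b, hb, hfb⟩ : ∃ b ∈ B, f (a * e / b) ≠ 0 := by
    rw [h, Ne, dilateSum_eq_zero_iff] at hA
    push Not at hA
    exact hA
  have hdiv : 1 ≤ a / b := by
    have : 1 * e ≤ a / b * e := by simpa [mul_div_right_comm] using hf.2 hfb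
    exact le_of_mul_le_mul_right this he
  rwa [eq_of_one_le_div_of_abs_le hdiv (hmin b hb)]

theorem dilateSum_inj [IsCancelAdd M] (hf : IsLeast f.support e) (he : 0 < e)
    (hA : 0 ∉ A) (hB : 0 ∉ B) : dilateSum f A = dilateSum f B ↔ A = B := by
  refine ⟨fun h => ?_, congrArg _⟩
  induction A using Multiset.strongInductionOn generalizing B with
  | ih A ih =>
    rcases (A + B).toFinset.eq_empty_or_nonempty with hempty | hne
    · have : A + B = 0 := Multiset.toFinset_eq_empty.1 hempty
      simp_all
    obtain ⟨a, ha, hmin⟩ := (A + B).toFinset.exists_min_image abs hne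
    simp only [Multiset.mem_toFinset, Multiset.mem_add] at ha hmin
    have haAB : a ∈ A ∧ a ∈ B := by
      rcases ha with ha | ha
      · exact ⟨ha, mem_of_dilateSum_eq hf he (ne_of_mem_of_not_mem ha hA) ha
          (fun b hb => hmin b (.inr hb)) (congrFun h _)⟩
      · exact ⟨mem_of_dilateSum_eq hf he (ne_of_mem_of_not_mem ha hB) ha
          (fun b hb => hmin b (.inl hb)) (congrFun h _).symm, ha⟩
    obtain ⟨A, rfl⟩ := Multiset.exists_cons_of_mem haAB.1
    obtain ⟨B, rfl⟩ := Multiset.exists_cons_of_mem haAB.2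
    have hcancel : dilateSum f A = dilateSum f B := by
      ext x
      simpa only [dilateSum_cons, add_right_inj] using congrFun h x
    rw [ih A (Multiset.lt_cons_self A a) (fun h₀ => hA (Multiset.mem_cons_of_mem h₀))
      (fun h₀ => hB (Multiset.mem_cons_of_mem h₀)) hcancel]

end Dilates

/-- The `k`-th eigenvalue of `dδ` on exact `p`-forms, equivalently of `δd` on coexact `p`-forms, on
the unit `2p`-sphere. -/
def midEigenvalue (p k : ℕ) : ℕ := (k + p) * (k + p + 1)

/-- The multiplicity of `midEigenvalue p k`: the common value of `dim V_{k+1}^p` and `dim W_k^p` on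
the `2p`-sphere. -/
def midMultiplicity (p k : ℕ) : ℕ :=
  ((2 * p + k).factorial * (2 * p + 2 * k + 1)) /
    ((p - 1).factorial * k.factorial * p.factorial * (p + k + 1) * (k + p))

/-- The spectrum, with multiplicities, of `dδ` on exact (or `δd` on coexact) `p`-forms on the unit
`2p`-sphere. -/
noncomputable def midSpectrum (p : ℕ) (x : ℝ) : ℕ :=
  ∑' k, if (midEigenvalue p k : ℝ) = x then midMultiplicity p k else 0

lemma midEigenvalue_strictMono (p : ℕ) : StrictMono (midEigenvalue p) := fun i j hij => by
  unfold midEigenvalue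
  gcongr

lemma midMultiplicity_zero {p : ℕ} (hp : 1 ≤ p) :
    midMultiplicity p 0 = (2 * p + 1).choose p := by
  obtain ⟨q, rfl⟩ := Nat.exists_eq_add_of_le' hp
  rw [Nat.choose_eq_factorial_div_factorial (by omega), midMultiplicity,
    show 2 * (q + 1) + 1 - (q + 1) = q + 1 + 1 by omega]
  simp only [Nat.factorial_succ, Nat.factorial_zero, Nat.add_sub_cancel]
  ring_nf

lemma midSpectrum_midEigenvalue (p k : ℕ) :
    midSpectrum p (midEigenvalue p k) = midMultiplicity p k := by
  simp [midSpectrum, (midEigenvalue_strictMono p).injective.eq_iff]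

lemma exists_midEigenvalue_eq_of_midSpectrum_ne_zero {p : ℕ} {x : ℝ} (h : midSpectrum p x ≠ 0) :
    ∃ k, (midEigenvalue p k : ℝ) = x := by
  contrapose! h
  simp [midSpectrum, h]

lemma isLeast_support_midSpectrum {p : ℕ} (hp : 1 ≤ p) :
    IsLeast (midSpectrum p).support (midEigenvalue p 0) := by
  constructor
  · rw [Function.mem_support, midSpectrum_midEigenvalue, midMultiplicity_zero hp]
    exact (Nat.choose_pos (by omega)).ne'
  · intro x hx
    obtain ⟨k, rfl⟩ := exists_midEigenvalue_eq_of_midSpectrum_ne_zero hx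
    exact_mod_cast (midEigenvalue_strictMono p).monotone k.zero_le

lemma midSpectrum_div (p : ℕ) {c : ℝ} (hc : c ≠ 0) (x : ℝ) :
    midSpectrum p (x / c) =
      ∑' k, if c * (midEigenvalue p k : ℝ) = x then midMultiplicity p k else 0 := by
  simp only [midSpectrum, eq_div_iff hc, mul_comm c]

lemma coexact_multiplicity_eq_midMultiplicity (p k : ℕ) :
    ((2 * p + (k + 1) - 1).factorial * (2 * p + 2 * (k + 1) - 1)) /
        (p.factorial * (k + 1 - 1).factorial * (2 * p - p - 1).factorial *
          (2 * p + (k + 1) - p - 1) * (k + 1 + p)) = midMultiplicity p k := by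
  rw [midMultiplicity, show 2 * p + (k + 1) - 1 = 2 * p + k by omega,
    show 2 * p + 2 * (k + 1) - 1 = 2 * p + 2 * k + 1 by omega,
    show 2 * p - p - 1 = p - 1 by omega, show 2 * p + (k + 1) - p - 1 = k + p by omega,
    Nat.add_sub_cancel]
  congr 1
  ring

lemma exact_multiplicity_eq_midMultiplicity (p k : ℕ) :
    ((2 * p + k).factorial * (2 * p + 2 * k + 1)) /
        ((p - 1).factorial * k.factorial * (2 * p - p).factorial * (2 * p + k - p + 1) *
          (k + p)) = midMultiplicity p k := by
  rw [midMultiplicity, show 2 * p - p = p by omega, show 2 * p + k - p = p + k by omega]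

lemma coexact_eigenvalue_eq_midEigenvalue (p k : ℕ) :
    (k + 1 + p) * (k + 1 + 2 * p - p - 1) = midEigenvalue p k := by
  rw [midEigenvalue, show k + 1 + 2 * p - p - 1 = k + p by omega]
  ring

lemma exact_eigenvalue_eq_midEigenvalue (p k : ℕ) :
    (k + p) * (k + 2 * p - p + 1) = midEigenvalue p k := by
  rw [midEigenvalue, show k + 2 * p - p = k + p by omega]

lemma sphereSpec_middle_eq_dilateSum (p : ℕ) {α β r : ℝ} (hα : α ≠ 0) (hβ : β ≠ 0) (hr : r ≠ 0) :
    sphereSpec (2 * p) p α β r = dilateSum (midSpectrum p) {α / r ^ 2, β / r ^ 2} := by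
  ext x
  have hr₂ : r ^ 2 ≠ 0 := pow_ne_zero 2 hr
  rw [dilateSum_pair, midSpectrum_div p (div_ne_zero hα hr₂),
    midSpectrum_div p (div_ne_zero hβ hr₂), add_comm, sphereSpec]
  congr 1
  · rw [← Nat.succ_injective.tsum_eq]
    · simp only [Nat.succ_eq_add_one, coexact_eigenvalue_eq_midEigenvalue,
        coexact_multiplicity_eq_midMultiplicity, Nat.le_add_left, true_and]
    · rintro (_ | k) hk
      · simp at hk
      · exact ⟨k, rfl⟩
  · simp only [exact_eigenvalue_eq_midEigenvalue, exact_multiplicity_eq_midMultiplicity]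

theorem stmt_16_general (p : ℕ) (hp : 1 ≤ p) {α α' β β' r r' : ℝ} (hα : α ≠ 0) (hα' : α' ≠ 0)
    (hβ : β ≠ 0) (hβ' : β' ≠ 0) (hr : r ≠ 0) (hr' : r' ≠ 0) :
    sphereSpec (2 * p) p α β r = sphereSpec (2 * p) p α' β' r' ↔
      (α / r ^ 2 = α' / r' ^ 2 ∧ β / r ^ 2 = β' / r' ^ 2) ∨
        (α / r ^ 2 = β' / r' ^ 2 ∧ β / r ^ 2 = α' / r' ^ 2) := by
  have he : (0 : ℝ) < midEigenvalue p 0 := by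
    unfold midEigenvalue
    positivity
  rw [sphereSpec_middle_eq_dilateSum p hα hβ hr, sphereSpec_middle_eq_dilateSum p hα' hβ' hr',
    dilateSum_inj (isLeast_support_midSpectrum hp) he (by simp [eq_comm, *]) (by simp [eq_comm, *]),
    multiset_pair_eq_pair_iff]

/-- Theorem 4.21 (case `n = 2p`): on a fixed sphere in middle degree, `F_{αβ,p}` and
`F_{α'β',p}` are isospectral iff `{α, β} = {α', β'}` as unordered pairs. -/
theorem stmt_16 (p : ℕ) (hp : 1 ≤ p)
    (α α' β β' r : ℝ) (hα : 0 < α) (hα' : 0 < α') (hβ : 0 < β) (hβ' : 0 < β') (hr : 0 < r) :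
    sphereSpec (2 * p) p α β r = sphereSpec (2 * p) p α' β' r ↔
      ((α = α' ∧ β = β') ∨ (α = β' ∧ β = α')) := by
  simpa only [div_left_inj' (pow_ne_zero 2 hr.ne')] using
    stmt_16_general p hp hα.ne' hα'.ne' hβ.ne' hβ'.ne' hr.ne' hr.ne'
end

section
/- Let n ≥ 2 and let p be a natural number with 1 ≤ p ≤ n−1 and n ≠ 2p, and let α, α', β, β', r, r' > 0 be reals such that S(n,p,α,β,r) = S(n,p,α',β',r') (as functions ℝ → ℕ). Then r = r' if and only if α = α' and β = β'. -/
open scoped Classical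

/-!
With `q = n - p`, the Hodge star identifies the family `λ` on `p`-forms with the family `μ` on
`q`-forms, so the spectrum is the sum of two dilated copies of one family, with dilation factors
`β / r²` and `α / r²`. The lowest eigenvalues of the two families have multiplicities
`(n + 1).choose q` and `(n + 1).choose p`, which differ when `p ≠ q`. If two different pairs of
factors gave the same spectrum, the lowest eigenvalue would have to come from one family on one
side and from the other family on the other side, and its multiplicity forbids this. So the
spectrum determines `α / r²` and `β / r²`.
-/

open Function

section LowestEigenvalue

variable {K M : Type*}

theorem support_add_eq_union [AddCommMonoid M] [Subsingleton (AddUnits M)] (f g : K → M) :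
    support (fun x => f x + g x) = support f ∪ support g := by
  ext x
  simp only [mem_support, Set.mem_union, ne_eq, add_eq_zero, not_and_or]

theorem eq_zero_of_lt_of_isLeast_support [Preorder K] [Zero M] {f : K → M} {x z : K}
    (hf : IsLeast (support f) x) (hz : z < x) : f z = 0 :=
  notMem_support.mp fun hmem => (hf.2 hmem).not_gt hz

theorem lowest_eq_of_add_eq_add_of_lt [LinearOrder K] [AddCommMonoid M] [Subsingleton (AddUnits M)]
    {f f' g g' : K → M} {x x' y y' : K}
    (hf : IsLeast (support f) x) (hf' : IsLeast (support f') x')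
    (hg : IsLeast (support g) y) (hg' : IsLeast (support g') y')
    (h : ∀ z, f z + g z = f' z + g' z) (hx : x < x') (hne : f x ≠ g' y') : y = y' := by
  have hmin : min x y = min x' y' := by
    have hleast := hf.union hg
    rw [← support_add_eq_union, funext h, support_add_eq_union] at hleast
    exact hleast.unique (hf'.union hg')
  rcases lt_trichotomy y y' with hy | hy | hy
  · exact absurd hmin (min_lt_min hx hy).ne
  · exact hy
  · have hxy : x = y' := by grind
    have hmult := h x
    rw [eq_zero_of_lt_of_isLeast_support hg (hxy.trans_lt hy),
      eq_zero_of_lt_of_isLeast_support hf' hx, add_zero, zero_add] at hmult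
    exact absurd (hmult.trans (congrArg g' hxy)) hne

end LowestEigenvalue

section Dilation

variable {K M : Type*} [Field K] [LinearOrder K] [IsStrictOrderedRing K]

theorem isLeast_support_comp_div [Zero M] {f : K → M} {x a : K} (hf : IsLeast (support f) x)
    (ha : 0 < a) : IsLeast (support fun z => f (z / a)) (a * x) := by
  refine ⟨?_, fun z hz => ?_⟩
  · simpa only [mem_support, mul_div_cancel_left₀ x ha.ne'] using hf.1
  · exact (le_div_iff₀' ha).mp (hf.2 hz)

theorem dilation_factor_unique [Zero M] {f : K → M} {x a b : K} (hf : IsLeast (support f) x)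
    (hx : 0 < x) (ha : 0 < a) (hb : 0 < b) (h : ∀ z, f (z / a) = f (z / b)) : a = b := by
  have hleast := isLeast_support_comp_div hf ha
  rw [funext h] at hleast
  exact mul_right_cancel₀ hx.ne' (hleast.unique (isLeast_support_comp_div hf hb))

theorem dilation_factors_unique [AddCancelCommMonoid M] [Subsingleton (AddUnits M)]
    {f g : K → M} {x y : K} (hf : IsLeast (support f) x) (hg : IsLeast (support g) y)
    (hx : 0 < x) (hy : 0 < y) (hne : f x ≠ g y)
    {a a' b b' : K} (ha : 0 < a) (ha' : 0 < a') (hb : 0 < b) (hb' : 0 < b')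
    (h : ∀ z, f (z / a) + g (z / b) = f (z / a') + g (z / b')) : a = a' ∧ b = b' := by
  suffices haa' : a = a' from
    ⟨haa', dilation_factor_unique hg hy hb hb' fun z => add_left_cancel (haa' ▸ h z)⟩
  by_contra haa'
  wlog hlt : a < a' generalizing a a' b b'
  · exact this ha' ha hb' hb (fun z => (h z).symm) (Ne.symm haa')
      (lt_of_le_of_ne (not_lt.mp hlt) (Ne.symm haa'))
  have hlowest : b * y = b' * y :=
    lowest_eq_of_add_eq_add_of_lt (isLeast_support_comp_div hf ha)
      (isLeast_support_comp_div hf ha') (isLeast_support_comp_div hg hb)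
      (isLeast_support_comp_div hg hb') h (mul_lt_mul_of_pos_right hlt hx)
      (by simpa only [mul_div_cancel_left₀ _ ha.ne', mul_div_cancel_left₀ _ hb'.ne'] using hne)
  have hbb' : b = b' := mul_right_cancel₀ hy.ne' hlowest
  exact haa' (dilation_factor_unique hf hx ha ha' fun z => add_right_cancel (hbb' ▸ h z))

end Dilation

section MultiplicityFunction

variable {ι K : Type*}

/-- The multiplicity with which `x` occurs in the spectrum whose eigenvalues are the `e k`, each
listed with multiplicity `m k`. It is meaningful when each value is attained finitely often:
otherwise the sum over `k` may have the junk value `0`. -/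
noncomputable def multiplicityFunction (e : ι → K) (m : ι → ℕ) (x : K) : ℕ :=
  ∑' k, if e k = x then m k else 0

theorem multiplicityFunction_apply {e : ι → K} (he : Injective e) (m : ι → ℕ) (k : ι) :
    multiplicityFunction e m (e k) = m k := by
  rw [multiplicityFunction, tsum_eq_single k fun j hj => if_neg (he.ne hj), if_pos rfl]

theorem support_multiplicityFunction_subset (e : ι → K) (m : ι → ℕ) :
    support (multiplicityFunction e m) ⊆ Set.range e := by
  intro x hx
  by_contra hrange
  refine hx ((tsum_congr fun k => if_neg fun hk => ?_).trans tsum_zero)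
  exact hrange ⟨k, hk⟩

theorem multiplicityFunction_const_mul [Field K] {c : K} (hc : c ≠ 0) (e : ι → K) (m : ι → ℕ)
    (x : K) : multiplicityFunction (fun k => c * e k) m x = multiplicityFunction e m (x / c) := by
  simp only [multiplicityFunction, eq_div_iff hc, mul_comm c]

theorem isLeast_support_multiplicityFunction [LinearOrder ι] [OrderBot ι] [Preorder K]
    {e : ι → K} (he : StrictMono e) {m : ι → ℕ} (hm : m ⊥ ≠ 0) :
    IsLeast (support (multiplicityFunction e m)) (e ⊥) := by
  refine ⟨?_, fun x hx => ?_⟩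
  · rwa [mem_support, multiplicityFunction_apply he.injective]
  · obtain ⟨k, rfl⟩ := support_multiplicityFunction_subset e m hx
    exact he.monotone bot_le

end MultiplicityFunction

section ExactForms

/-- The `k`-th eigenvalue, counted from `k = 0`, of `dδ` on exact `p`-forms on the unit sphere of
dimension `p + q`: the paper's `μ(k)` at `α = r = 1`. By Hodge duality, `exactEigenvalue q p k` is
the paper's `λ(k + 1)` on `p`-forms at `β = r = 1`. -/
def exactEigenvalue (p q k : ℕ) : ℕ := (k + p) * (k + q + 1)

/-- The multiplicity of `exactEigenvalue p q k`, in the paper `dim W_k^p` on the sphere of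
dimension `p + q`; by Hodge duality, `exactMultiplicity q p k` is `dim V_{k+1}^p`. -/
def exactMultiplicity (p q k : ℕ) : ℕ :=
  (p + q + k).factorial * (p + q + 2 * k + 1) /
    ((p - 1).factorial * k.factorial * q.factorial * (k + q + 1) * (k + p))

/-- The spectrum, with multiplicities, of `dδ` on exact `p`-forms on the unit sphere of dimension
`p + q`. -/
noncomputable def exactSpectrum (p q : ℕ) : ℝ → ℕ :=
  multiplicityFunction (fun k => (exactEigenvalue p q k : ℝ)) (exactMultiplicity p q)

theorem exactEigenvalue_strictMono (p q : ℕ) : StrictMono (exactEigenvalue p q) :=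
  strictMono_nat_of_lt_succ fun k => by
    unfold exactEigenvalue
    nlinarith

theorem exactEigenvalue_zero_pos {p : ℕ} (hp : 0 < p) (q : ℕ) : 0 < exactEigenvalue p q 0 := by
  unfold exactEigenvalue
  positivity

theorem exactMultiplicity_zero {p : ℕ} (hp : 0 < p) (q : ℕ) :
    exactMultiplicity p q 0 = (p + q + 1).choose p := by
  have hsub : p + q + 1 - p = q + 1 := by omega
  rw [Nat.choose_eq_factorial_div_factorial (by omega), hsub, exactMultiplicity,
    Nat.factorial_succ (p + q), Nat.factorial_succ q, ← Nat.mul_factorial_pred hp.ne']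
  congr 1
  · rw [add_zero, mul_zero, add_zero, mul_comm]
  · rw [Nat.factorial_zero]
    ring

theorem exactMultiplicity_zero_ne_swap {p q : ℕ} (hp : 0 < p) (hq : 0 < q) (hpq : p ≠ q) :
    exactMultiplicity q p 0 ≠ exactMultiplicity p q 0 := by
  have hsymm : (q + p + 1).choose q = (p + q + 1).choose (p + 1) := by
    rw [add_comm q p]
    exact Nat.choose_symm_of_eq_add (by omega)
  rw [exactMultiplicity_zero hp, exactMultiplicity_zero hq, hsymm]
  intro heq
  have hrec := Nat.choose_succ_right_eq (p + q + 1) p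
  rw [heq] at hrec
  have hsucc : p + 1 = p + q + 1 - p :=
    Nat.eq_of_mul_eq_mul_left (Nat.choose_pos (by omega)) hrec
  omega

theorem isLeast_support_exactSpectrum {p : ℕ} (hp : 0 < p) (q : ℕ) :
    IsLeast (support (exactSpectrum p q)) (exactEigenvalue p q 0 : ℝ) :=
  isLeast_support_multiplicityFunction (Nat.strictMono_cast.comp (exactEigenvalue_strictMono p q))
    (by
      rw [bot_eq_zero, exactMultiplicity_zero hp]
      exact (Nat.choose_pos (by omega)).ne')

theorem exactSpectrum_exactEigenvalue (p q k : ℕ) :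
    exactSpectrum p q (exactEigenvalue p q k) = exactMultiplicity p q k :=
  multiplicityFunction_apply
    (Nat.strictMono_cast.comp (exactEigenvalue_strictMono p q)).injective _ k

end ExactForms

section SphereSpectrum

theorem coexact_eigenvalue_succ_eq (p q k : ℕ) :
    (k + 1 + p) * (k + 1 + (p + q) - p - 1) = exactEigenvalue q p k := by
  rw [exactEigenvalue, show k + 1 + (p + q) - p - 1 = k + q by omega]
  ring

theorem coexact_multiplicity_succ_eq (p q k : ℕ) :
    (p + q + (k + 1) - 1).factorial * (p + q + 2 * (k + 1) - 1) /
        (p.factorial * (k + 1 - 1).factorial * (p + q - p - 1).factorial *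
          (p + q + (k + 1) - p - 1) * (k + 1 + p)) =
      exactMultiplicity q p k := by
  rw [exactMultiplicity, show p + q + (k + 1) - 1 = q + p + k by omega,
    show p + q + 2 * (k + 1) - 1 = q + p + 2 * k + 1 by omega, Nat.add_sub_cancel,
    Nat.add_sub_cancel_left, show p + q + (k + 1) - p - 1 = k + q by omega]
  congr 1
  ring

theorem exact_eigenvalue_eq (p q k : ℕ) :
    (k + p) * (k + (p + q) - p + 1) = exactEigenvalue p q k := by
  rw [exactEigenvalue, show k + (p + q) - p = k + q by omega]

theorem exact_multiplicity_eq (p q k : ℕ) :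
    (p + q + k).factorial * (p + q + 2 * k + 1) /
        ((p - 1).factorial * k.factorial * (p + q - p).factorial * (p + q + k - p + 1) *
          (k + p)) =
      exactMultiplicity p q k := by
  rw [exactMultiplicity, Nat.add_sub_cancel_left, show p + q + k - p = k + q by omega]

theorem sphereSpec_eq_exactSpectrum_add (p q : ℕ) {α β r : ℝ} (hα : α ≠ 0) (hβ : β ≠ 0)
    (hr : r ≠ 0) (x : ℝ) :
    sphereSpec (p + q) p α β r x =
      exactSpectrum q p (x / (β / r ^ 2)) + exactSpectrum p q (x / (α / r ^ 2)) := by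
  have hr2 : r ^ 2 ≠ 0 := pow_ne_zero 2 hr
  rw [exactSpectrum, exactSpectrum, ← multiplicityFunction_const_mul (div_ne_zero hβ hr2),
    ← multiplicityFunction_const_mul (div_ne_zero hα hr2), sphereSpec]
  congr 1
  · rw [← (add_left_injective 1).tsum_eq]
    · simp only [le_add_iff_nonneg_left, zero_le, true_and, coexact_eigenvalue_succ_eq,
        coexact_multiplicity_succ_eq, multiplicityFunction]
    · intro k hk
      have hpos : 1 ≤ k := by
        by_contra hlt
        exact hk (if_neg fun hcond => hlt hcond.1)
      exact ⟨k - 1, Nat.sub_add_cancel hpos⟩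
  · simp only [exact_eigenvalue_eq, exact_multiplicity_eq, multiplicityFunction]

theorem div_sq_eq_of_sphereSpec_eq {p q : ℕ} (hp : 0 < p) (hq : 0 < q) (hpq : p ≠ q)
    {α α' β β' r r' : ℝ} (hα : 0 < α) (hα' : 0 < α') (hβ : 0 < β) (hβ' : 0 < β')
    (hr : 0 < r) (hr' : 0 < r')
    (h : sphereSpec (p + q) p α β r = sphereSpec (p + q) p α' β' r') :
    β / r ^ 2 = β' / r' ^ 2 ∧ α / r ^ 2 = α' / r' ^ 2 := by
  refine dilation_factors_unique (isLeast_support_exactSpectrum hq p)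
    (isLeast_support_exactSpectrum hp q) (Nat.cast_pos.mpr (exactEigenvalue_zero_pos hq p))
    (Nat.cast_pos.mpr (exactEigenvalue_zero_pos hp q)) ?_ (by positivity) (by positivity)
    (by positivity) (by positivity) fun x => ?_
  · rw [exactSpectrum_exactEigenvalue, exactSpectrum_exactEigenvalue]
    exact exactMultiplicity_zero_ne_swap hp hq hpq
  · rw [← sphereSpec_eq_exactSpectrum_add p q hα.ne' hβ.ne' hr.ne',
      ← sphereSpec_eq_exactSpectrum_add p q hα'.ne' hβ'.ne' hr'.ne', h]

end SphereSpectrum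

/-- Corollary 4.22 (case `n ≠ 2p`): for isospectral operators `F_{αβ,p}` and `F_{α'β',p}`
on spheres of radii `r` and `r'`, one has `r = r'` iff `(α, β) = (α', β')`. -/
theorem stmt_17 (n p : ℕ) (hn : 2 ≤ n) (hp : 1 ≤ p) (hpn : p ≤ n - 1) (hn2p : n ≠ 2 * p)
    (α α' β β' r r' : ℝ) (hα : 0 < α) (hα' : 0 < α') (hβ : 0 < β) (hβ' : 0 < β')
    (hr : 0 < r) (hr' : 0 < r')
    (h : sphereSpec n p α β r = sphereSpec n p α' β' r') :
    r = r' ↔ (α = α' ∧ β = β') := by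
  obtain ⟨q, rfl⟩ := Nat.exists_eq_add_of_le (show p ≤ n by omega)
  obtain ⟨hratioβ, hratioα⟩ :=
    div_sq_eq_of_sphereSpec_eq hp (by omega) (by omega) hα hα' hβ hβ' hr hr' h
  constructor
  · rintro rfl
    have hsq : r ^ 2 ≠ 0 := by positivity
    exact ⟨(div_left_inj' hsq).mp hratioα, (div_left_inj' hsq).mp hratioβ⟩
  · rintro ⟨rfl, rfl⟩
    have hsq : r ^ 2 = r' ^ 2 := by
      simpa only [div_eq_mul_inv, mul_right_inj' hα.ne', inv_inj] using hratioα
    exact (pow_left_inj₀ hr.le hr'.le two_ne_zero).mp hsq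
end
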